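/- The product over all primes p > 2 of (p-1)²/(p(p-2)) is at most 1.5148 and at least 1.5147. -/

import Mathlib

/-!
Multiplying a factor of the product by `1 - p⁻²` leaves
`(p - 1)³(p + 1) / (p³(p - 2)) = 1 + (2p - 1) / (p³(p - 2)) = 1 + O(p⁻³)`.
Since `∏ (1 - p⁻²)⁻¹` over odd primes is `(3/4) ζ(2) = π²/8` by the Euler product, the product
in question is `π²/8` times a product that converges quickly. All factors of the latter are at
least `1`, so its partial product over `p < 400` bounds it from below (`one_le_corr`), while its
tail over `p ≥ N` is at most `1 + 1/(N - 2)²` by a telescoping argument (`corr_mul_le`).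
The partial product over `p < 400` is computed exactly, and a six-digit approximation of `π`
then suffices.
-/

/-- The factor `(p - 1)³(p + 1) / (p³(p - 2))` at an odd prime `p` that remains after dividing the
original factor by the Euler factor of `ζ(2)`; it is `1` at all other naturals. -/
noncomputable def corr (n : ℕ) : ℝ :=
  if n.Prime ∧ 2 < n then ((n : ℝ) - 1) ^ 3 * (n + 1) / ((n : ℝ) ^ 3 * (n - 2)) else 1

/-- The Euler factor of `ζ(2)` at an odd prime, and `1` at all other naturals. -/
noncomputable def euler (n : ℕ) : ℝ :=
  if n.Prime ∧ 2 < n then (1 - ((n : ℝ) ^ 2)⁻¹)⁻¹ else 1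

lemma hasProd_primes :
    HasProd (fun p : Nat.Primes => (1 - (((p : ℕ) : ℝ) ^ 2)⁻¹)⁻¹) (Real.pi ^ 2 / 6) := by
  let f : ℕ →*₀ ℝ :=
    { toFun := fun n => ((n : ℝ) ^ 2)⁻¹
      map_zero' := by simp
      map_one' := by simp
      map_mul' := by intro a b; push_cast; rw [mul_pow, mul_inv] }
  have hf : ∀ n, f n = ((n : ℝ) ^ 2)⁻¹ := fun _ => rfl
  have hs : HasSum (fun n => f n) (Real.pi ^ 2 / 6) := by
    simpa [hf] using hasSum_zeta_two
  have h := EulerProduct.eulerProduct_completely_multiplicative_hasProd (f := f) hs.summable.norm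
  rw [hs.tsum_eq] at h
  simpa [hf] using h

lemma hasProd_euler : HasProd euler (Real.pi ^ 2 / 8) := by
  have h1 : HasProd (Set.mulIndicator {p : ℕ | p.Prime} fun n : ℕ => (1 - ((n : ℝ) ^ 2)⁻¹)⁻¹)
      (Real.pi ^ 2 / 6) := hasProd_subtype_iff_mulIndicator.mp hasProd_primes
  -- Remove the Euler factor `4/3` at the prime `2`.
  have h2 : HasProd (fun n : ℕ => if n = 2 then (3 / 4 : ℝ) else 1) (3 / 4) :=
    hasProd_ite_eq 2 _
  have h3 := h1.mul h2
  convert h3 using 1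
  · funext n
    by_cases hp : n.Prime
    · rcases hp.two_le.eq_or_lt with h | h
      · subst h
        norm_num [euler, Set.mulIndicator]
      · simp [euler, Set.mulIndicator, hp, h, h.ne']
    · have : n ≠ 2 := by rintro rfl; exact hp Nat.prime_two
      simp [euler, Set.mulIndicator, hp, this]
  · ring

lemma corr_eq {n : ℕ} (hn : n.Prime ∧ 2 < n) :
    corr n = 1 + (2 * (n : ℝ) - 1) / ((n : ℝ) ^ 3 * (n - 2)) := by
  have h : (3 : ℝ) ≤ n := by exact_mod_cast hn.2
  have h2 : (n : ℝ) - 2 ≠ 0 := by linarith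
  have h0 : (n : ℝ) ≠ 0 := by linarith
  rw [corr, if_pos hn]
  field_simp
  ring

lemma one_le_corr (n : ℕ) : 1 ≤ corr n := by
  by_cases hn : n.Prime ∧ 2 < n
  · have h : (3 : ℝ) ≤ n := by exact_mod_cast hn.2
    rw [corr_eq hn]
    have : 0 ≤ (2 * (n : ℝ) - 1) / ((n : ℝ) ^ 3 * (n - 2)) :=
      div_nonneg (by linarith) (mul_nonneg (by positivity) (by linarith))
    linarith
  · simp [corr, hn]

lemma multipliable_corr : Multipliable corr := by
  have hs : Summable (fun n => corr n - 1) := by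
    refine Summable.of_nonneg_of_le (fun n => sub_nonneg.mpr (one_le_corr n)) (fun n => ?_)
      (hasSum_zeta_two.summable.mul_left 2)
    by_cases hn : n.Prime ∧ 2 < n
    · have h : (3 : ℝ) ≤ n := by exact_mod_cast hn.2
      rw [corr_eq hn, add_sub_cancel_left, mul_one_div,
        div_le_div_iff₀ (mul_pos (by positivity) (by linarith)) (by positivity)]
      have h2 : 0 ≤ (n : ℝ) ^ 2 * (2 * (n * (n - 2)) - (2 * n - 1)) :=
        mul_nonneg (by positivity) (by nlinarith)
      linarith
    · simp only [corr, if_neg hn, sub_self]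
      positivity
  simpa using Real.multipliable_one_add_of_summable hs

lemma multipliable_corr_tendsto :
    Filter.Tendsto (fun n => ∏ i ∈ Finset.range n, corr i) Filter.atTop (nhds (∏' n, corr n)) :=
  multipliable_corr.hasProd.tendsto_prod_nat

/-- One step of the telescoping estimate of the tail, valid for all integers `n ≥ 3`. -/
lemma corr_mul_le {n : ℕ} (hn : 3 ≤ n) :
    corr n * (1 + 1 / ((n : ℝ) - 1) ^ 2) ≤ 1 + 1 / ((n : ℝ) - 2) ^ 2 := by
  have h : (3 : ℝ) ≤ n := by exact_mod_cast hn
  have ha : 0 < (n : ℝ) - 2 := by linarith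
  have hb : 0 < (n : ℝ) - 1 := by linarith
  by_cases hp : n.Prime ∧ 2 < n
  · rw [corr_eq hp, ← sub_nonneg]
    have e : 1 + 1 / ((n : ℝ) - 2) ^ 2 -
        (1 + (2 * (n : ℝ) - 1) / ((n : ℝ) ^ 3 * (n - 2))) * (1 + 1 / ((n : ℝ) - 1) ^ 2) =
        ((2 * n - 3) * n ^ 3 - (2 * n - 1) * (n ^ 2 - 2 * n + 2) * (n - 2)) /
          ((n : ℝ) ^ 3 * (n - 2) ^ 2 * (n - 1) ^ 2) := by
      field_simp
      ring
    rw [e]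
    refine div_nonneg ?_ (by positivity)
    have e2 : (2 * (n : ℝ) - 3) * n ^ 3 - (2 * n - 1) * (n ^ 2 - 2 * n + 2) * (n - 2) =
        (n : ℝ) ^ 2 * (6 * n - 16) + (14 * n - 4) := by ring
    rw [e2]
    exact add_nonneg (mul_nonneg (by positivity) (by linarith)) (by linarith)
  · simp only [corr, if_neg hp, one_mul]
    gcongr
    linarith

lemma prod_corr_le (k : ℕ) :
    (∏ i ∈ Finset.range (400 + k), corr i) * (1 + 1 / (((400 + k : ℕ) : ℝ) - 2) ^ 2) ≤
      (∏ i ∈ Finset.range 400, corr i) * (1 + 1 / 398 ^ 2) := by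
  induction k with
  | zero => norm_num
  | succ k ih =>
    refine le_trans ?_ ih
    rw [← add_assoc, Finset.prod_range_succ, mul_assoc]
    refine mul_le_mul_of_nonneg_left ?_
      (Finset.prod_nonneg fun i _ => zero_le_one.trans (one_le_corr i))
    have h := corr_mul_le (n := 400 + k) (by omega)
    have e : ((400 + k + 1 : ℕ) : ℝ) - 2 = ((400 + k : ℕ) : ℝ) - 1 := by
      push_cast
      ring
    rw [e]
    exact h

lemma tprod_corr_le :
    ∏' n, corr n ≤ (∏ i ∈ Finset.range 400, corr i) * (1 + 1 / 398 ^ 2) := by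
  refine le_of_tendsto multipliable_corr_tendsto ?_
  filter_upwards [Filter.eventually_ge_atTop 400] with n hn
  obtain ⟨k, rfl⟩ := Nat.exists_eq_add_of_le hn
  refine le_trans (le_mul_of_one_le_right
    (Finset.prod_nonneg fun i _ => zero_le_one.trans (one_le_corr i)) ?_) (prod_corr_le k)
  have : 0 ≤ 1 / (((400 + k : ℕ) : ℝ) - 2) ^ 2 := by positivity
  linarith

lemma le_tprod_corr : ∏ i ∈ Finset.range 400, corr i ≤ ∏' n, corr n := by
  refine ge_of_tendsto multipliable_corr_tendsto ?_
  filter_upwards [Filter.eventually_ge_atTop 400] with n hn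
  rw [← Finset.prod_range_mul_prod_Ico _ hn]
  exact le_mul_of_one_le_right (Finset.prod_nonneg fun i _ => zero_le_one.trans (one_le_corr i))
    (Finset.one_le_prod fun i _ => one_le_corr i)

/-- Numerator of `corr n`; truncated subtraction is harmless as `2 < n` in the first branch. -/
def corrNum (n : ℕ) : ℕ := if n.Prime ∧ 2 < n then (n - 1) ^ 3 * (n + 1) else 1

/-- Denominator of `corr n`; truncated subtraction is harmless as `2 < n` in the first branch. -/
def corrDen (n : ℕ) : ℕ := if n.Prime ∧ 2 < n then n ^ 3 * (n - 2) else 1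

lemma corr_eq_div (n : ℕ) : corr n = (corrNum n : ℝ) / corrDen n := by
  by_cases hn : n.Prime ∧ 2 < n
  · have h1 : 1 ≤ n := by omega
    have h2 : 2 ≤ n := by omega
    simp only [corr, corrNum, corrDen, if_pos hn]
    push_cast [h1, h2]
    rfl
  · simp [corr, corrNum, corrDen, hn]

lemma corrDen_pos (n : ℕ) : 0 < corrDen n := by
  unfold corrDen
  split_ifs with h
  · have : 0 < n - 2 := by omega
    have : 0 < n := by omega
    positivity
  · exact one_pos

lemma prod_corr_bounds :
    1.22780 ≤ ∏ i ∈ Finset.range 400, corr i ∧ ∏ i ∈ Finset.range 400, corr i ≤ 1.22784 := by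
  have hD : (0 : ℝ) < ((∏ i ∈ Finset.range 400, corrDen i : ℕ) : ℝ) := by
    exact_mod_cast Finset.prod_pos fun i _ => corrDen_pos i
  have e : ∏ i ∈ Finset.range 400, corr i =
      ((∏ i ∈ Finset.range 400, corrNum i : ℕ) : ℝ) /
        ((∏ i ∈ Finset.range 400, corrDen i : ℕ) : ℝ) := by
    push_cast
    rw [← Finset.prod_div_distrib]
    exact Finset.prod_congr rfl fun i _ => corr_eq_div i
  have hl : 122780 * ∏ i ∈ Finset.range 400, corrDen i ≤
      100000 * ∏ i ∈ Finset.range 400, corrNum i := by decide +kernel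
  have hu : 100000 * ∏ i ∈ Finset.range 400, corrNum i ≤
      122784 * ∏ i ∈ Finset.range 400, corrDen i := by decide +kernel
  rw [e, le_div_iff₀ hD, div_le_iff₀ hD]
  generalize ∏ i ∈ Finset.range 400, corrDen i = D at hl hu
  generalize ∏ i ∈ Finset.range 400, corrNum i = A at hl hu
  have hl' : (122780 : ℝ) * D ≤ 100000 * A := by exact_mod_cast hl
  have hu' : (100000 : ℝ) * A ≤ 122784 * D := by exact_mod_cast hu
  constructor <;> linarith

lemma tprod_eq :
    (∏' p : {p : ℕ // p.Prime ∧ 2 < p}, ((p : ℝ) - 1) ^ 2 / (p * ((p : ℝ) - 2))) =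
      Real.pi ^ 2 / 8 * ∏' n, corr n := by
  have h := hasProd_euler.mul multipliable_corr.hasProd
  refine HasProd.tprod_eq ?_
  refine (hasProd_subtype_iff_mulIndicator (s := {p : ℕ | p.Prime ∧ 2 < p})
    (f := fun n : ℕ => ((n : ℝ) - 1) ^ 2 / (n * ((n : ℝ) - 2)))).mpr ?_
  convert h using 1
  funext n
  by_cases hn : n.Prime ∧ 2 < n
  · have h3 : (3 : ℝ) ≤ n := by exact_mod_cast hn.2
    have h0 : (n : ℝ) ≠ 0 := by linarith
    have h2 : (n : ℝ) - 2 ≠ 0 := by linarith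
    have h4 : (n : ℝ) ^ 2 - 1 ≠ 0 := by nlinarith
    rw [Set.mulIndicator_of_mem (show n ∈ {p : ℕ | p.Prime ∧ 2 < p} from hn)]
    simp only [euler, corr, if_pos hn]
    have h5 : (1 - ((n : ℝ) ^ 2)⁻¹)⁻¹ = n ^ 2 / (n ^ 2 - 1) := by field_simp
    rw [h5]
    field_simp
    ring
  · rw [Set.mulIndicator_of_notMem (show n ∉ {p : ℕ | p.Prime ∧ 2 < p} from hn)]
    simp only [euler, corr, if_neg hn, mul_one]

theorem twin_prime_reciprocal_bounds :
    (∏' p : {p : ℕ // p.Prime ∧ 2 < p}, ((p : ℝ) - 1) ^ 2 / (p * ((p : ℝ) - 2))) ≤ 1.5148 ∧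
    1.5147 ≤ (∏' p : {p : ℕ // p.Prime ∧ 2 < p}, ((p : ℝ) - 1) ^ 2 / (p * ((p : ℝ) - 2))) := by
  rw [tprod_eq]
  obtain ⟨hl, hu⟩ := prod_corr_bounds
  have hl2 := hl.trans le_tprod_corr
  have hu2 := tprod_corr_le.trans (mul_le_mul_of_nonneg_right hu (by norm_num))
  have p1 : Real.pi ^ 2 ≤ 3.141593 ^ 2 :=
    pow_le_pow_left₀ Real.pi_pos.le Real.pi_lt_d6.le 2
  have p2 : 3.141592 ^ 2 ≤ Real.pi ^ 2 :=
    pow_le_pow_left₀ (by norm_num) Real.pi_gt_d6.le 2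
  constructor
  · calc Real.pi ^ 2 / 8 * ∏' n, corr n
        ≤ 3.141593 ^ 2 / 8 * (1.22784 * (1 + 1 / 398 ^ 2)) := by
          gcongr
      _ ≤ 1.5148 := by norm_num
  · calc (1.5147 : ℝ) ≤ 3.141592 ^ 2 / 8 * 1.22780 := by norm_num
      _ ≤ Real.pi ^ 2 / 8 * ∏' n, corr n := by
          gcongr
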